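/- β_W is a left inverse of α_{W,i} on the image of β_W: for every density g̃ on E^{V+W} and every i ∈ W, β_W(α_{W,i}(β_W(g̃))) = β_W(g̃). -/

import Mathlib

open Finset
open scoped Classical

/-- Patterns over the integer interval `{A,...,B}` with values in `E`. -/
abbrev Pat (E : Type) (A B : ℤ) : Type := {x // x ∈ Finset.Icc A B} → E

/-- Evaluation of a pattern at an integer site (arbitrary value outside the domain). -/
noncomputable def ev {E : Type} [Nonempty E] {A B : ℤ} (φ : Pat E A B) (j : ℤ) : E :=
  if h : j ∈ Finset.Icc A B then φ ⟨j, h⟩ else Classical.arbitrary E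

/-- The window `σ_i(φ)|_V` of a pattern `φ`, a pattern on `V = {-p,...,q}`. -/
noncomputable def win {E : Type} [Nonempty E] (p q : ℕ) {A B : ℤ} (i : ℤ) (φ : Pat E A B) :
    Pat E (-(p : ℤ)) (q : ℤ) :=
  fun v => ev φ (i + v.1)

/-- A density on a finite type: nonnegative weights summing to one. -/
def IsDensity {α : Type} [Fintype α] (g : α → ℝ) : Prop :=
  (∀ x, 0 ≤ g x) ∧ ∑ x, g x = 1

/-- The distribution associated with a weight function, evaluated on an event. -/
noncomputable def Pr {α : Type} [Fintype α] (g : α → ℝ) (P : α → Prop) : ℝ :=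
  ∑ x, if P x then g x else 0

/-- Conditional probability `μ[P | Q] = μ[P ∩ Q]/μ[Q]` (`0` if `0/0`). -/
noncomputable def condPr {α : Type} [Fintype α] (g : α → ℝ) (P Q : α → Prop) : ℝ :=
  Pr g (fun x => P x ∧ Q x) / Pr g Q

/-- The marginalization operator `β_W`. -/
noncomputable def beta {E : Type} [Fintype E] [DecidableEq E] [Nonempty E]
    (p q : ℕ) (t u : ℤ) (g : Pat E (-(p : ℤ) - t) ((q : ℤ) + u) → ℝ) (i : ℤ)
    (ψ : Pat E (-(p : ℤ)) (q : ℤ)) : ℝ :=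
  Pr g (fun χ => win p q i χ = ψ)

/-- The reconstruction operator `α_{W,i}`. -/
noncomputable def alpha {E : Type} [Fintype E] [DecidableEq E] [Nonempty E]
    (p q : ℕ) (t u : ℤ) (g : ℤ → Pat E (-(p : ℤ)) (q : ℤ) → ℝ) (i : ℤ)
    (ψ : Pat E (-(p : ℤ) - t) ((q : ℤ) + u)) : ℝ :=
  (∏ k ∈ Finset.Icc (-t) (i - 1),
      condPr (g k) (fun χ => ev χ (-(p : ℤ)) = ev ψ (k + -(p : ℤ)))
        (fun χ => ∀ v ∈ Finset.Icc (-(p : ℤ) + 1) (q : ℤ), ev χ v = ev ψ (k + v))) *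
    g i (win p q i ψ) *
    (∏ l ∈ Finset.Icc (i + 1) u,
      condPr (g l) (fun χ => ev χ (q : ℤ) = ev ψ (l + (q : ℤ)))
        (fun χ => ∀ v ∈ Finset.Icc (-(p : ℤ)) ((q : ℤ) - 1), ev χ v = ev ψ (l + v)))

/-- Extendable de Bruijn densities. -/
def Extendable {E : Type} [Fintype E] [DecidableEq E] [Nonempty E]
    (p q : ℕ) (t u : ℤ) (g : ℤ → Pat E (-(p : ℤ)) (q : ℤ) → ℝ) : Prop :=
  ∀ i ∈ Finset.Icc (-t) u, ∀ φ, 0 < g i φ →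
    ∃ ψ : Pat E (-(p : ℤ) - t) ((q : ℤ) + u),
      win p q i ψ = φ ∧ ∀ j ∈ Finset.Icc (-t) u, 0 < g j (win p q j ψ)

/-- The event `{χ : χ|_S = ψ|_S}`. -/
def agreeOn {E : Type} [Nonempty E] {A B : ℤ} (S : Finset ℤ) (ψ χ : Pat E A B) : Prop :=
  ∀ j ∈ S, ev χ j = ev ψ j

/-!
The reconstruction `alpha g i` multiplies the local weight at position `i` by one-step conditional
weights to the left and to the right. If neighbouring local weights have the same marginal on their
overlap, moving `i` by one replaces `(g i / m) * g (i + 1)` by `g i * (g (i + 1) / m)`, where `m` is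
that marginal, so the product does not depend on `i`. To sum out the last (first) site, choose `i`
just before the last (just after the first) position: that site then enters only through a single
conditional weight, which sums to one. Hence the marginals of the reconstruction on shorter
intervals are again reconstructions, and on a single window this is the given local weight.
-/

section Patterns

variable {E : Type} [Nonempty E] {A B : ℤ}

theorem ev_of_mem (φ : Pat E A B) {j : ℤ} (hj : j ∈ Icc A B) : ev φ j = φ ⟨j, hj⟩ :=
  dif_pos hj

theorem ev_update (φ : Pat E A B) {x : ℤ} (hx : x ∈ Icc A B) (e : E) :
    ev (Function.update φ ⟨x, hx⟩ e) = Function.update (ev φ) x e := by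
  funext j
  by_cases hj : j ∈ Icc A B
  · simp only [ev_of_mem _ hj, Function.update_apply, Subtype.mk.injEq]
  · have hjx : j ≠ x := fun h => hj (h ▸ hx)
    simp only [ev, dif_neg hj, Function.update_of_ne hjx]

theorem agreeOn_update_of_notMem {S : Finset ℤ} {x : ℤ} (hxS : x ∉ S) (φ : Pat E A B)
    (hx : x ∈ Icc A B) (e : E) : agreeOn S φ (Function.update φ ⟨x, hx⟩ e) := fun j hj => by
  rw [ev_update, Function.update_of_ne (ne_of_mem_of_not_mem hj hxS)]

theorem agreeOn_insert_update_iff {S : Finset ℤ} {x : ℤ} (hxS : x ∉ S) (φ χ : Pat E A B)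
    (hx : x ∈ Icc A B) (e : E) :
    agreeOn (insert x S) (Function.update φ ⟨x, hx⟩ e) χ ↔ ev χ x = e ∧ agreeOn S φ χ := by
  simp only [agreeOn, ev_update, forall_mem_insert, Function.update_self]
  refine and_congr_right fun _ => forall₂_congr fun j hj => ?_
  rw [Function.update_of_ne (ne_of_mem_of_not_mem hj hxS)]

theorem agreeOn_Icc_iff (φ χ : Pat E A B) : agreeOn (Icc A B) φ χ ↔ χ = φ := by
  constructor
  · intro h
    funext j
    simpa only [ev_of_mem _ j.2] using h j j.2
  · rintro rfl j -
    rfl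

variable {p q : ℕ}

theorem ev_win (k : ℤ) (ψ : Pat E A B) {v : ℤ} (hv : v ∈ Icc (-(p : ℤ)) q) :
    ev (win p q k ψ) v = ev ψ (k + v) :=
  ev_of_mem _ hv

theorem agreeOn_win_iff {S : Finset ℤ} (hS : S ⊆ Icc (-(p : ℤ)) q) (k : ℤ) (ψ : Pat E A B)
    (χ : Pat E (-(p : ℤ)) q) :
    agreeOn S (win p q k ψ) χ ↔ ∀ v ∈ S, ev χ v = ev ψ (k + v) :=
  forall₂_congr fun v hv => by rw [ev_win k ψ (hS hv)]

theorem win_eq_win_iff (k : ℤ) (ψ χ : Pat E A B) :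
    win p q k χ = win p q k ψ ↔ agreeOn (Icc (k - p) (k + q)) ψ χ := by
  rw [← agreeOn_Icc_iff, agreeOn_win_iff subset_rfl, sub_eq_add_neg, ← image_add_left_Icc, agreeOn,
    forall_mem_image]
  exact forall₂_congr fun v hv => by rw [ev_win k χ hv]

theorem win_update_of_notMem (k : ℤ) (ψ : Pat E A B) {x : ℤ} (hx : x ∈ Icc A B)
    (hxk : x ∉ Icc (k - p) (k + q)) (e : E) :
    win p q k (Function.update ψ ⟨x, hx⟩ e) = win p q k ψ :=
  (win_eq_win_iff k _ _).2 (agreeOn_update_of_notMem hxk ψ hx e)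

theorem win_update (k : ℤ) (ψ : Pat E A B) {v : ℤ} (hv : v ∈ Icc (-(p : ℤ)) q)
    (hx : k + v ∈ Icc A B) (e : E) :
    win p q k (Function.update ψ ⟨k + v, hx⟩ e) = Function.update (win p q k ψ) ⟨v, hv⟩ e := by
  funext w
  simp only [win, ev_update, Function.update_apply, add_right_inj, Subtype.ext_iff]

theorem win_surjective {k : ℤ} (hA : A ≤ k - p) (hB : k + q ≤ B) :
    Function.Surjective (win p q k : Pat E A B → Pat E (-(p : ℤ)) q) := by
  intro φ
  refine ⟨fun x => ev φ (x - k), funext fun v => ?_⟩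
  have hv := mem_Icc.1 v.2
  have hkv : k + v ∈ Icc A B := mem_Icc.2 ⟨by lia, by lia⟩
  rw [win, ev_of_mem _ hkv, add_sub_cancel_left, ev_of_mem]

end Patterns

section Cylinders

theorem Pr_fiberwise {α γ : Type} [Fintype α] [Fintype γ] (f : α → ℝ) (w : α → γ) (P : γ → Prop) :
    Pr (fun y => Pr f (fun x => w x = y)) P = Pr f (fun x => P (w x)) := by
  simp only [Pr, ← sum_filter]
  convert sum_fiberwise_eq_sum_filter univ {y | P y} w f
  simp only [mem_filter, mem_univ, true_and]

variable {E : Type} [Fintype E] [Nonempty E] {A B : ℤ}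

/-- The mass that the weight `g` gives to the cylinder `{χ : χ|_S = φ|_S}`, that is, the marginal
of `g` on the set of sites `S`, evaluated at `φ|_S`. -/
noncomputable def cylMass (g : Pat E A B → ℝ) (S : Finset ℤ) (φ : Pat E A B) : ℝ :=
  Pr g (agreeOn S φ)

variable (g : Pat E A B → ℝ)

theorem cylMass_Icc (φ : Pat E A B) : cylMass g (Icc A B) φ = g φ := by
  simp only [cylMass, Pr, agreeOn_Icc_iff, sum_ite_eq', mem_univ, if_true]

theorem cylMass_update_of_notMem {S : Finset ℤ} {x : ℤ} (hxS : x ∉ S) (φ : Pat E A B)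
    (hx : x ∈ Icc A B) (e : E) :
    cylMass g S (Function.update φ ⟨x, hx⟩ e) = cylMass g S φ := by
  have h := agreeOn_update_of_notMem hxS φ hx e
  refine congrArg (Pr g) (funext fun χ => propext (forall₂_congr fun j hj => ?_))
  rw [h j hj]

theorem sum_cylMass_insert_update {S : Finset ℤ} {x : ℤ} (hxS : x ∉ S) (φ : Pat E A B)
    (hx : x ∈ Icc A B) :
    ∑ e, cylMass g (insert x S) (Function.update φ ⟨x, hx⟩ e) = cylMass g S φ := by
  simp only [cylMass, Pr, agreeOn_insert_update_iff hxS, ite_and]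
  rw [sum_comm]
  simp only [sum_ite_eq, mem_univ, if_true]

theorem sum_update_eq_cylMass (φ : Pat E A B) {x : ℤ} (hx : x ∈ Icc A B) :
    ∑ e, g (Function.update φ ⟨x, hx⟩ e) = cylMass g ((Icc A B).erase x) φ := by
  rw [← sum_cylMass_insert_update g (notMem_erase x _) φ hx, insert_erase hx]
  simp only [cylMass_Icc]

theorem eq_zero_of_cylMass_eq_zero {g : Pat E A B → ℝ} (hg : ∀ φ, 0 ≤ g φ) {S : Finset ℤ}
    {φ : Pat E A B} (h : cylMass g S φ = 0) : g φ = 0 := by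
  rw [cylMass, Pr, ← sum_filter, sum_eq_zero_iff_of_nonneg fun χ _ => hg χ] at h
  exact h φ (mem_filter.2 ⟨mem_univ φ, fun _ _ => rfl⟩)

/-- The conditional weight, under `g`, of the letter of `φ` at the site `x` given its letters at all
other sites; it is `0` when these have marginal weight `0`. -/
noncomputable def siteCond (x : ℤ) (φ : Pat E A B) : ℝ :=
  g φ / cylMass g ((Icc A B).erase x) φ

theorem condPr_eq_siteCond {x : ℤ} (hx : x ∈ Icc A B) (φ : Pat E A B) :
    condPr g (fun χ => ev χ x = ev φ x) (agreeOn ((Icc A B).erase x) φ) = siteCond g x φ := by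
  have hand (χ : Pat E A B) :
      (ev χ x = ev φ x ∧ agreeOn ((Icc A B).erase x) φ χ) ↔ agreeOn (Icc A B) φ χ := by
    nth_rw 2 [← insert_erase hx]
    exact (forall_mem_insert x _ fun j => ev χ j = ev φ j).symm
  simp only [condPr, hand]
  rw [siteCond, ← cylMass_Icc g φ]
  rfl

theorem mul_sum_siteCond_update {x : ℤ} (hx : x ∈ Icc A B) (φ : Pat E A B) {c : ℝ}
    (hc : cylMass g ((Icc A B).erase x) φ = 0 → c = 0) :
    c * ∑ e, siteCond g x (Function.update φ ⟨x, hx⟩ e) = c := by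
  simp only [siteCond, cylMass_update_of_notMem g (notMem_erase x _)]
  rw [← sum_div, sum_update_eq_cylMass, ← mul_div_assoc]
  exact mul_div_cancel_of_imp hc

end Cylinders

section Reconstruction

variable {E : Type} [Fintype E] [Nonempty E] {p q : ℕ}

/-- De Bruijn families: nonnegative weights `g k` on patterns over `V = {-p,...,q}`, indexed by the
positions `k ∈ {a,...,b}`, such that the windows at `k` and `k + 1` have the same marginal on their
overlap, which is `V_+` as seen from `k` and `V_-` as seen from `k + 1`. The total mass is not
normalized. -/
structure IsDeBruijn (g : ℤ → Pat E (-(p : ℤ)) q → ℝ) (a b : ℤ) : Prop where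
  nonneg : ∀ k ∈ Icc a b, ∀ φ, 0 ≤ g k φ
  cylMass_eq : ∀ k ∈ Ico a b, ∀ φ φ' : Pat E (-(p : ℤ)) q,
    (∀ v ∈ Ico (-(p : ℤ)) q, ev φ (v + 1) = ev φ' v) →
      cylMass (g k) (Ioc (-(p : ℤ)) q) φ = cylMass (g (k + 1)) (Ico (-(p : ℤ)) q) φ'

theorem IsDeBruijn.mono {g : ℤ → Pat E (-(p : ℤ)) q → ℝ} {a b a' b' : ℤ} (hg : IsDeBruijn g a b)
    (ha : a ≤ a') (hb : b' ≤ b) : IsDeBruijn g a' b' where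
  nonneg k hk := hg.nonneg k (Icc_subset_Icc ha hb hk)
  cylMass_eq k hk := hg.cylMass_eq k (Ico_subset_Ico ha hb hk)

theorem neg_mem_Icc_window : -(p : ℤ) ∈ Icc (-(p : ℤ)) (q : ℤ) := left_mem_Icc.2 (by lia)

theorem natCast_mem_Icc_window : (q : ℤ) ∈ Icc (-(p : ℤ)) (q : ℤ) := right_mem_Icc.2 (by lia)

variable {A B : ℤ}

/-- The reconstruction from `g` over the positions `{a,...,b}`, started at position `i`. With `a`
and `b` varying, it describes the marginals of `alpha` on shorter intervals of sites. -/
noncomputable def recon (g : ℤ → Pat E (-(p : ℤ)) q → ℝ) (a b i : ℤ) (ψ : Pat E A B) : ℝ :=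
  (∏ k ∈ Ico a i, siteCond (g k) (-p) (win p q k ψ)) * g i (win p q i ψ) *
    ∏ l ∈ Ioc i b, siteCond (g l) q (win p q l ψ)

theorem alpha_eq_recon [DecidableEq E] (t u : ℤ) (g : ℤ → Pat E (-(p : ℤ)) q → ℝ) (i : ℤ) :
    alpha p q t u g i = recon g (-t) u i := by
  funext ψ
  simp only [alpha, recon, Icc_sub_one_right_eq_Ico, Icc_add_one_left_eq_Ioc]
  refine congrArg₂ _ (congrArg (· * _) ?_) ?_
  · refine prod_congr rfl fun k _ => ?_
    rw [← condPr_eq_siteCond _ neg_mem_Icc_window, ev_win k ψ neg_mem_Icc_window,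
      Icc_erase_left]
    exact congrArg _ (funext fun χ => propext (agreeOn_win_iff Ioc_subset_Icc_self k ψ χ).symm)
  · refine prod_congr rfl fun l _ => ?_
    rw [← condPr_eq_siteCond _ natCast_mem_Icc_window, ev_win l ψ natCast_mem_Icc_window,
      Icc_erase_right]
    exact congrArg _ (funext fun χ => propext (agreeOn_win_iff Ico_subset_Icc_self l ψ χ).symm)

variable {g : ℤ → Pat E (-(p : ℤ)) q → ℝ} {a b : ℤ}

theorem IsDeBruijn.cylMass_win_eq (hg : IsDeBruijn g a b) {k : ℤ} (hk : k ∈ Ico a b)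
    (ψ : Pat E A B) :
    cylMass (g k) (Ioc (-(p : ℤ)) q) (win p q k ψ) =
      cylMass (g (k + 1)) (Ico (-(p : ℤ)) q) (win p q (k + 1) ψ) := by
  refine hg.cylMass_eq k hk _ _ fun v hv => ?_
  have hv' := mem_Ico.1 hv
  rw [ev_win _ _ (mem_Icc.2 ⟨by lia, by lia⟩), ev_win _ _ (Ico_subset_Icc_self hv)]
  congr 1
  ring

theorem IsDeBruijn.recon_add_one (hg : IsDeBruijn g a b) {i : ℤ} (hi : i ∈ Ico a b)
    (ψ : Pat E A B) : recon g a b (i + 1) ψ = recon g a b i ψ := by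
  have ⟨hai, hib⟩ := mem_Ico.1 hi
  rw [recon, recon, ← insert_Ico_right_eq_Ico_add_one hai, prod_insert right_notMem_Ico,
    ← insert_Ioc_add_one_left_eq_Ioc hib, prod_insert left_notMem_Ioc, siteCond, siteCond,
    Icc_erase_left, Icc_erase_right, hg.cylMass_win_eq hi]
  ring

theorem IsDeBruijn.recon_eq_recon_left (hg : IsDeBruijn g a b) {i : ℤ} (hi : i ∈ Icc a b)
    (ψ : Pat E A B) : recon g a b i ψ = recon g a b a ψ := by
  obtain ⟨hai, hib⟩ := mem_Icc.1 hi
  induction i, hai using Int.leInduction with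
  | base => rfl
  | succ i hai ih =>
    rw [hg.recon_add_one (mem_Ico.2 ⟨hai, by lia⟩), ih (mem_Icc.2 ⟨hai, by lia⟩) (by lia)]

theorem IsDeBruijn.recon_eq_recon (hg : IsDeBruijn g a b) {i j : ℤ} (hi : i ∈ Icc a b)
    (hj : j ∈ Icc a b) (ψ : Pat E A B) : recon g a b i ψ = recon g a b j ψ :=
  (hg.recon_eq_recon_left hi ψ).trans (hg.recon_eq_recon_left hj ψ).symm

theorem IsDeBruijn.sum_recon_update_right (hg : IsDeBruijn g a (b + 1)) {j : ℤ}
    (hj : j ∈ Icc a b) (ψ : Pat E A B) (hx : b + 1 + q ∈ Icc A B) :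
    ∑ e, recon g a (b + 1) j (Function.update ψ ⟨b + 1 + q, hx⟩ e) = recon g a b j ψ := by
  have hab : a ≤ b := (mem_Icc.1 hj).1.trans (mem_Icc.1 hj).2
  have hwin {k : ℤ} (hk : k ≤ b) (e : E) :
      win p q k (Function.update ψ ⟨b + 1 + q, hx⟩ e) = win p q k ψ :=
    win_update_of_notMem k ψ hx (by simp only [mem_Icc]; lia) e
  have hprod (e : E) :
      ∏ k ∈ Ico a b, siteCond (g k) (-p) (win p q k (Function.update ψ ⟨b + 1 + q, hx⟩ e)) =
        ∏ k ∈ Ico a b, siteCond (g k) (-p) (win p q k ψ) :=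
    prod_congr rfl fun k hk => by rw [hwin (mem_Ico.1 hk).2.le]
  have hzero : cylMass (g (b + 1)) ((Icc (-(p : ℤ)) q).erase q) (win p q (b + 1) ψ) = 0 →
      g b (win p q b ψ) = 0 := by
    rw [Icc_erase_right, ← hg.cylMass_win_eq (mem_Ico.2 ⟨hab, by lia⟩)]
    exact eq_zero_of_cylMass_eq_zero (hg.nonneg b (mem_Icc.2 ⟨hab, by lia⟩))
  have hb : b ∈ Icc a b := right_mem_Icc.2 hab
  simp only [hg.recon_eq_recon (Icc_subset_Icc_right (by lia) hj)
      (Icc_subset_Icc_right (by lia) hb), (hg.mono le_rfl (by lia)).recon_eq_recon hj hb]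
  simp only [recon, hprod, hwin le_rfl, win_update (b + 1) ψ natCast_mem_Icc_window hx,
    ← insert_Ioc_add_one_left_eq_Ioc (lt_add_one b), Ioc_self, prod_insert (notMem_empty _),
    prod_empty, mul_one]
  rw [← mul_sum, mul_assoc, mul_sum_siteCond_update _ _ _ hzero]

theorem IsDeBruijn.sum_recon_update_left (hg : IsDeBruijn g (a - 1) b) {j : ℤ}
    (hj : j ∈ Icc a b) (ψ : Pat E A B) (hx : a - 1 + -p ∈ Icc A B) :
    ∑ e, recon g (a - 1) b j (Function.update ψ ⟨a - 1 + -p, hx⟩ e) = recon g a b j ψ := by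
  have hab : a ≤ b := (mem_Icc.1 hj).1.trans (mem_Icc.1 hj).2
  have hwin {k : ℤ} (hk : a ≤ k) (e : E) :
      win p q k (Function.update ψ ⟨a - 1 + -p, hx⟩ e) = win p q k ψ :=
    win_update_of_notMem k ψ hx (by simp only [mem_Icc]; lia) e
  have hprod (e : E) :
      ∏ k ∈ Ioc a b, siteCond (g k) q (win p q k (Function.update ψ ⟨a - 1 + -p, hx⟩ e)) =
        ∏ k ∈ Ioc a b, siteCond (g k) q (win p q k ψ) :=
    prod_congr rfl fun k hk => by rw [hwin (mem_Ioc.1 hk).1.le]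
  have hzero : cylMass (g (a - 1)) ((Icc (-(p : ℤ)) q).erase (-p)) (win p q (a - 1) ψ) = 0 →
      g a (win p q a ψ) = 0 := by
    rw [Icc_erase_left, hg.cylMass_win_eq (mem_Ico.2 ⟨le_rfl, by lia⟩), sub_add_cancel]
    exact eq_zero_of_cylMass_eq_zero (hg.nonneg a (mem_Icc.2 ⟨by lia, hab⟩))
  have ha : a ∈ Icc a b := left_mem_Icc.2 hab
  simp only [hg.recon_eq_recon (Icc_subset_Icc_left (by lia) hj)
      (Icc_subset_Icc_left (by lia) ha), (hg.mono (by lia) le_rfl).recon_eq_recon hj ha]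
  simp only [recon, hprod, hwin le_rfl, win_update (a - 1) ψ neg_mem_Icc_window hx,
    ← insert_Ico_sub_one_right_eq_Ico (sub_one_lt a), Ico_self, prod_insert (notMem_empty _),
    prod_empty, mul_one, one_mul]
  rw [← sum_mul, ← sum_mul, mul_comm (∑ e, _), mul_sum_siteCond_update _ _ _ hzero]

theorem IsDeBruijn.cylMass_eq_recon_right (hg : IsDeBruijn g a b) {f : Pat E A B → ℝ} {j : ℤ}
    (hj : j ∈ Icc a b) (hA : A ≤ a - p) (hB : b + q ≤ B)
    (hf : ∀ ψ, cylMass f (Icc (a - p) (b + q)) ψ = recon g a b j ψ) (ψ : Pat E A B) :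
    cylMass f (Icc (a - p) (j + q)) ψ = recon g a j j ψ := by
  obtain ⟨haj, hjb⟩ := mem_Icc.1 hj
  induction b, hjb using Int.leInduction with
  | base => exact hf ψ
  | succ b hjb ih =>
    have hjab : j ∈ Icc a b := mem_Icc.2 ⟨haj, hjb⟩
    refine ih (hg.mono le_rfl (by lia)) hjab (by lia) fun ψ => ?_
    have hx : b + 1 + q ∈ Icc A B := mem_Icc.2 ⟨by lia, hB⟩
    have hins : insert (b + 1 + (q : ℤ)) (Icc (a - p) (b + q)) = Icc (a - p) (b + 1 + q) := by
      rw [add_right_comm, insert_Icc_right_eq_Icc_add_one (by lia)]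
    rw [← hg.sum_recon_update_right hjab ψ hx,
      ← sum_cylMass_insert_update f (by simp only [mem_Icc]; lia) ψ hx, hins]
    simp only [hf]

theorem IsDeBruijn.cylMass_eq_recon_left (hg : IsDeBruijn g a b) {f : Pat E A B → ℝ} {j : ℤ}
    (hj : j ∈ Icc a b) (hA : A ≤ a - p) (hB : b + q ≤ B)
    (hf : ∀ ψ, cylMass f (Icc (a - p) (b + q)) ψ = recon g a b j ψ) (ψ : Pat E A B) :
    cylMass f (Icc (j - p) (b + q)) ψ = recon g j b j ψ := by
  obtain ⟨haj, hjb⟩ := mem_Icc.1 hj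
  induction a, haj using Int.leInductionDown with
  | base => exact hf ψ
  | pred a haj ih =>
    have hjab : j ∈ Icc a b := mem_Icc.2 ⟨haj, hjb⟩
    refine ih (hg.mono (by lia) le_rfl) hjab (by lia) fun ψ => ?_
    have hx : a - 1 + -p ∈ Icc A B := mem_Icc.2 ⟨by lia, by lia⟩
    have hins : insert (a - 1 + -(p : ℤ)) (Icc (a - p) (b + q)) = Icc (a - 1 - p) (b + q) := by
      rw [← sub_eq_add_neg, sub_right_comm, insert_Icc_left_eq_Icc_sub_one (by lia)]
    rw [← hg.sum_recon_update_left hjab ψ hx,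
      ← sum_cylMass_insert_update f (by simp only [mem_Icc]; lia) ψ hx, hins]
    simp only [hf]

theorem IsDeBruijn.cylMass_recon_window (hg : IsDeBruijn g a b) (hA : A = a - p)
    (hB : B = b + q) {i j : ℤ} (hi : i ∈ Icc a b) (hj : j ∈ Icc a b) (ψ : Pat E A B) :
    cylMass (recon g a b i) (Icc (j - p) (j + q)) ψ = g j (win p q j ψ) := by
  obtain ⟨haj, hjb⟩ := mem_Icc.1 hj
  have hfull (ψ : Pat E A B) :
      cylMass (recon g a b i) (Icc (a - p) (b + q)) ψ = recon g a b j ψ := by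
    rw [← hA, ← hB, cylMass_Icc, hg.recon_eq_recon hi hj]
  have hright := hg.cylMass_eq_recon_right hj hA.le hB.ge hfull
  rw [(hg.mono le_rfl hjb).cylMass_eq_recon_left (right_mem_Icc.2 haj) hA.le (by lia) hright]
  simp only [recon, Ico_self, Ioc_self, prod_empty, one_mul, mul_one]

end Reconstruction

section Marginalization

variable {E : Type} [Fintype E] [DecidableEq E] [Nonempty E] {p q : ℕ} {t u : ℤ}

theorem beta_win (f : Pat E (-(p : ℤ) - t) ((q : ℤ) + u) → ℝ) (j : ℤ)
    (ψ : Pat E (-(p : ℤ) - t) ((q : ℤ) + u)) :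
    beta p q t u f j (win p q j ψ) = cylMass f (Icc (j - p) (j + q)) ψ := by
  simp only [beta, win_eq_win_iff]
  rfl

theorem cylMass_beta (f : Pat E (-(p : ℤ) - t) ((q : ℤ) + u) → ℝ) (k : ℤ) {S : Finset ℤ}
    (hS : S ⊆ Icc (-(p : ℤ)) q) (φ : Pat E (-(p : ℤ)) q) :
    cylMass (beta p q t u f k) S φ = Pr f (fun χ => ∀ v ∈ S, ev χ (k + v) = ev φ v) := by
  refine (Pr_fiberwise f (win p q k) (agreeOn S φ)).trans (congrArg _ (funext fun χ => propext ?_))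
  exact forall₂_congr fun v hv => by rw [ev_win k χ (hS hv)]

theorem isDeBruijn_beta {f : Pat E (-(p : ℤ) - t) ((q : ℤ) + u) → ℝ} (hf : ∀ χ, 0 ≤ f χ)
    (a b : ℤ) : IsDeBruijn (beta p q t u f) a b where
  nonneg k _ φ := sum_nonneg fun χ _ => by split_ifs <;> simp only [hf χ, le_refl]
  cylMass_eq k _ φ φ' hφ := by
    rw [cylMass_beta f k Ioc_subset_Icc_self, cylMass_beta f (k + 1) Ico_subset_Icc_self,
      ← Ico_add_one_add_one_eq_Ioc, ← image_add_right_Ico]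
    refine congrArg _ (funext fun χ => propext (forall_mem_image.trans ?_))
    refine forall₂_congr fun v hv => ?_
    rw [hφ v hv, add_right_comm, add_assoc]

theorem stmt_6_general {g : ℤ → Pat E (-(p : ℤ)) q → ℝ} (hg : IsDeBruijn g (-t) u) {i : ℤ}
    (hi : i ∈ Icc (-t) u) :
    ∀ j ∈ Icc (-t) u, beta p q t u (alpha p q t u g i) j = g j := by
  intro j hj
  have ⟨htj, hju⟩ := mem_Icc.1 hj
  funext φ
  obtain ⟨ψ, rfl⟩ : ∃ ψ : Pat E (-(p : ℤ) - t) ((q : ℤ) + u), win p q j ψ = φ :=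
    win_surjective (by lia) (by lia) φ
  rw [beta_win, alpha_eq_recon, hg.cylMass_recon_window (by ring) (by ring) hi hj]

end Marginalization

/-- `β_W` is a left inverse of `α_{W,i}` on the image of `β_W`. -/
theorem stmt_6
    (E : Type) [Fintype E] [DecidableEq E] [Nonempty E]
    (p q : ℕ) (t u : ℤ) (htu : -t ≤ u)
    (gtil : Pat E (-(p : ℤ) - t) ((q : ℤ) + u) → ℝ) (hgtil : IsDensity gtil)
    (i : ℤ) (hi : i ∈ Finset.Icc (-t) u) :
    ∀ j ∈ Finset.Icc (-t) u,
      beta p q t u (alpha p q t u (beta p q t u gtil) i) j = beta p q t u gtil j := by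
  exact stmt_6_general (isDeBruijn_beta hgtil.1 (-t) u) hi
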